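/- Let f : ℝ^N → (−∞,∞] be proper, closed and convex, let h : ℝ^N → ℝ be convex and differentiable, and let L > 0. Suppose (x^k) is a sequence in dom f and (m_k) is a sequence of proper, closed, convex functions with 0 ≤ f(x) − m_k(x) ≤ L·D_h(x, x^k) for all x ∈ ℝ^N and all k, and suppose x^{k+1} is a global minimizer of u ↦ m_k(u) + L·D_h(u, x^k) for each k (i.e. step size α = 1/L). Let x* be a global minimizer of f. Then for all k ≥ 1 the O(1/k) convergence rate holds: f(x^k) − f(x*) ≤ L·D_h(x*, x⁰)/k. -/

import Mathlib

open scoped RealInnerProductSpace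
open Filter Topology

/-- The Bregman distance `D_h(x, u) = h x − h u − ⟨∇h u, x − u⟩` associated with `h`. -/
noncomputable def breg {N : ℕ} (h : EuclideanSpace ℝ (Fin N) → ℝ)
    (x u : EuclideanSpace ℝ (Fin N)) : ℝ :=
  h x - h u - ⟪gradient h u, x - u⟫

/-- Convexity for extended-real-valued functions. -/
def ERealConvex {N : ℕ} (f : EuclideanSpace ℝ (Fin N) → EReal) : Prop :=
  ∀ x y : EuclideanSpace ℝ (Fin N), ∀ a b : ℝ, 0 ≤ a → 0 ≤ b → a + b = 1 →
    f (a • x + b • y) ≤ (a : EReal) * f x + (b : EReal) * f y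

lemma aux_deriv_nonneg (g : ℝ → ℝ) (d : ℝ) (hd : HasDerivAt g d 0) (h0 : g 0 = 0)
    (hg : ∀ t, 0 < t → t < 1 → 0 ≤ g t) : 0 ≤ d := by
  have h1 := hd.tendsto_slope_zero_right
  refine ge_of_tendsto h1 ?_
  have : Set.Ioo (0:ℝ) 1 ∈ 𝓝[>] (0:ℝ) := Ioo_mem_nhdsGT one_pos
  filter_upwards [this] with t ht
  have := hg t ht.1 ht.2
  have h2 : 0 < t⁻¹ := inv_pos.mpr ht.1
  simp only [zero_add, h0, sub_zero, smul_eq_mul]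
  positivity

lemma aux_line {N : ℕ} (h : EuclideanSpace ℝ (Fin N) → ℝ) (hh : Differentiable ℝ h)
    (p v : EuclideanSpace ℝ (Fin N)) :
    HasDerivAt (fun t : ℝ => h (p + t • v)) ⟪gradient h p, v⟫ 0 := by
  have h1 := (hh p).hasGradientAt.hasFDerivAt
  have h2 : HasDerivAt (fun t : ℝ => p + t • v) v 0 := by
    simpa using ((hasDerivAt_id (0:ℝ)).smul_const v).const_add p
  have h3 : HasFDerivAt h ((InnerProductSpace.toDual ℝ _) (gradient h p)) (p + (0:ℝ) • v) := by
    simpa using h1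
  have h4 := h3.comp_hasDerivAt (0:ℝ) h2
  simpa [Function.comp_def] using h4

lemma aux_breg_nonneg {N : ℕ} (h : EuclideanSpace ℝ (Fin N) → ℝ) (hh : Differentiable ℝ h)
    (hc : ConvexOn ℝ Set.univ h) (z u : EuclideanSpace ℝ (Fin N)) : 0 ≤ breg h z u := by
  have h1 := aux_line h hh u (z - u)
  have h2 := ((hasDerivAt_id (0:ℝ)).mul_const (h z - h u)).sub (h1.sub_const (h u))
  have := aux_deriv_nonneg _ _ h2 (by simp) (by
    intro t ht ht1
    have := hc.2 (Set.mem_univ u) (Set.mem_univ z) (sub_nonneg.2 ht1.le) ht.le (by ring)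
    have e : (1 - t) • u + t • z = u + t • (z - u) := by module
    rw [e] at this
    simp only [smul_eq_mul] at this
    simp only [Pi.sub_apply, id]
    linarith)
  unfold breg
  linarith

lemma aux_three {N : ℕ} (h : EuclideanSpace ℝ (Fin N) → ℝ) (hh : Differentiable ℝ h)
    (L : ℝ) (M : EuclideanSpace ℝ (Fin N) → EReal) (hM : ERealConvex M)
    (y p u : EuclideanSpace ℝ (Fin N))
    (hmin : ∀ v, M p + ((L * breg h p y : ℝ) : EReal) ≤ M v + ((L * breg h v y : ℝ) : EReal))
    (a b : ℝ) (ha : M p = a) (hb : M u = b) :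
    a + L * breg h p y + L * breg h u p ≤ b + L * breg h u y := by
  have h1 := aux_line h hh p (u - p)
  have h2 := ((h1.sub_const (h p)).sub
    ((hasDerivAt_id (0:ℝ)).mul_const ⟪gradient h y, u - p⟫)).const_mul L
  have h3 := h2.sub ((hasDerivAt_id (0:ℝ)).mul_const (a - b))
  have := aux_deriv_nonneg _ _ h3 (by simp) (by
    intro t ht ht1
    have hcv := hM p u (1 - t) t (sub_nonneg.2 ht1.le) ht.le (by ring)
    have e : (1 - t) • p + t • u = p + t • (u - p) := by module
    rw [e, ha, hb] at hcv
    have hm := (hmin (p + t • (u - p))).trans (add_le_add_left hcv _)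
    rw [ha] at hm
    norm_cast at hm
    have e2 : breg h (p + t • (u - p)) y - breg h p y
        = h (p + t • (u - p)) - h p - t * ⟪gradient h y, u - p⟫ := by
      have : p + t • (u - p) - y = (p - y) + t • (u - p) := by module
      simp only [breg, this, inner_add_right, inner_smul_right]
      ring
    simp only [Pi.sub_apply, id]
    rw [← e2]
    linarith)
  have e3 : breg h p y + breg h u p - breg h u y
      = ⟪gradient h y, u - p⟫ - ⟪gradient h p, u - p⟫ := by
    have : u - y = (u - p) + (p - y) := by abel
    simp only [breg, this, inner_add_right]
    ring
  have e4 : L * breg h p y + L * breg h u p - L * breg h u y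
      = L * (⟪gradient h y, u - p⟫ - ⟪gradient h p, u - p⟫) := by rw [← e3]; ring
  linarith

/-- **O(1/k) convergence rate in the convex setting.** If `f` is proper closed convex,
each model `m_k` satisfies `0 ≤ f − m_k ≤ L·D_h(·, x^k)`, `x^{k+1}` globally minimizes
`u ↦ m_k u + L·D_h(u, x^k)` (step size `α = 1/L`), and `x*` minimizes `f`, then
`f(x^k) − f(x*) ≤ L·D_h(x*, x⁰)/k` for all `k ≥ 1`. -/
theorem convex_convergence_rate (N : ℕ)
    (f : EuclideanSpace ℝ (Fin N) → EReal)
    (hfbot : ∀ z, f z ≠ ⊥) (hfproper : ∃ z, f z ≠ ⊤)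
    (hfclosed : LowerSemicontinuous f) (hfconv : ERealConvex f)
    (h : EuclideanSpace ℝ (Fin N) → ℝ)
    (hhconv : ConvexOn ℝ Set.univ h) (hhdiff : Differentiable ℝ h)
    (L : ℝ) (hL : 0 < L)
    (x : ℕ → EuclideanSpace ℝ (Fin N)) (hdom : ∀ k, f (x k) ≠ ⊤)
    (m : ℕ → EuclideanSpace ℝ (Fin N) → EReal)
    (hmbot : ∀ k z, m k z ≠ ⊥) (hmproper : ∀ k, ∃ z, m k z ≠ ⊤)
    (hmclosed : ∀ k, LowerSemicontinuous (m k)) (hmconv : ∀ k, ERealConvex (m k))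
    (hmodel : ∀ k z, m k z ≤ f z ∧ f z - m k z ≤ ((L * breg h z (x k) : ℝ) : EReal))
    (hmin : ∀ k u, m k (x (k+1)) + ((L * breg h (x (k+1)) (x k) : ℝ) : EReal) ≤
                   m k u + ((L * breg h u (x k) : ℝ) : EReal))
    (xstar : EuclideanSpace ℝ (Fin N)) (hstar : ∀ z, f xstar ≤ f z) :
    ∀ k : ℕ, 1 ≤ k →
      f (x k) - f xstar ≤ ((L * breg h xstar (x 0) / (k : ℝ) : ℝ) : EReal) := by
  have hsT : f xstar ≠ ⊤ := fun e => hdom 0 (top_le_iff.1 (e ▸ hstar (x 0)))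
  have key : ∀ k u, f u ≠ ⊤ → (f (x (k+1))).toReal + L * breg h u (x (k+1))
      ≤ (f u).toReal + L * breg h u (x k) := by
    intro k u hu
    have hmT : ∀ z, f z ≠ ⊤ → m k z ≠ ⊤ := fun z hz e =>
      hz (top_le_iff.1 (e ▸ (hmodel k z).1))
    have a1 := EReal.coe_toReal (hmT _ (hdom (k+1))) (hmbot k _)
    have b1 := EReal.coe_toReal (hmT u hu) (hmbot k _)
    have c1 := EReal.coe_toReal (hdom (k+1)) (hfbot _)
    have d1 := EReal.coe_toReal hu (hfbot _)
    have h3 := aux_three h hhdiff L (m k) (hmconv k) (x k) (x (k+1)) u (hmin k) _ _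
      a1.symm b1.symm
    have h4 := (hmodel k (x (k+1))).2
    rw [← a1, ← c1] at h4
    have h5 := (hmodel k u).1
    rw [← b1, ← d1] at h5
    norm_cast at h4 h5
    linarith
  have hnn := aux_breg_nonneg h hhdiff hhconv
  have mono : ∀ k, (f (x (k+1))).toReal ≤ (f (x k)).toReal := by
    intro k
    have h1 := key k (x k) (hdom k)
    have h2 : breg h (x k) (x k) = 0 := by simp [breg]
    have h3 := mul_nonneg hL.le (hnn (x k) (x (k+1)))
    rw [h2] at h1
    linarith
  have main : ∀ k : ℕ, (k : ℝ) * ((f (x k)).toReal - (f xstar).toReal)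
      + L * breg h xstar (x k) ≤ L * breg h xstar (x 0) := by
    intro k
    induction k with
    | zero => simp
    | succ k ih =>
      have h1 := key k xstar hsT
      have h2 := mul_le_mul_of_nonneg_left (mono k) (Nat.cast_nonneg (α := ℝ) k)
      push_cast
      linarith
  intro k hk
  rw [← EReal.coe_toReal (hdom k) (hfbot _), ← EReal.coe_toReal hsT (hfbot _)]
  norm_cast
  have hk' : (0:ℝ) < k := by exact_mod_cast hk
  rw [le_div_iff₀ hk']
  have h3 := mul_nonneg hL.le (hnn xstar (x k))
  have := main k
  linarith
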